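/- arXiv:2501.08265 — 6 statements merged into one kernel-verified Lean document; each statement's English description precedes it below -/
import Mathlib

section
/- (Finite convergence of the restricted conjugate direction method.) Given an initial vector x₀ ∈ R(C) and a set of restricted conjugate directions p₀, …, p_{q−1}, the RCDM iterates satisfy x_q = x*_C, i.e. the method converges to the unique minimizer of φ over R(C) in at most q steps. -/
open Matrix

/-!
Write the objective as `½ B(x, x) - f(x)` for a bilinear form `B` and a linear functional `f`, so
that the residual at `x` is the functional `f - B(x, ·)`. A step along `p` with exact step length
makes the residual vanish on `p`, and conjugacy keeps it zero on all earlier directions. The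
directions are `B`-orthogonal and non-isotropic, hence linearly independent, so that `dim W` of
them span `W`: after `dim W` steps the residual vanishes on `W`. It also vanishes on `W` at a
minimizer over `W`, and a point of `W` at which it does so is unique, since the coordinates of a
vector along the directions are determined by its pairings with them.
-/

open Module
open LinearMap (BilinForm)

section Residual

variable {R M : Type*} [CommRing R] [AddCommGroup M] [Module R M]

/-- The residual `f - B(x, ·)` of the point `x`: the paper's `r(x) = b - Sx`, encoded as the linear
functional `d ↦ r(x)ᵀd`. -/
def dualResidual (B : BilinForm R M) (f : Dual R M) (x : M) : Dual R M :=
  f - B x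

variable (B : BilinForm R M) (f : Dual R M)

lemma dualResidual_apply (x d : M) : dualResidual B f x d = f d - B x d := rfl

lemma dualResidual_add_smul_apply (x p d : M) (a : R) :
    dualResidual B f (x + a • p) d = dualResidual B f x d - a * B p d := by
  simp only [dualResidual_apply, map_add, map_smul, LinearMap.add_apply, LinearMap.smul_apply,
    smul_eq_mul]
  ring

end Residual

section OrthogonalFamily

variable {R M ι : Type*} [CommRing R] [NoZeroDivisors R] [AddCommGroup M] [Module R M]

lemma eq_zero_of_mem_span_range_of_iIsOrtho {B : BilinForm R M} {p : ι → M}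
    (hortho : B.iIsOrtho p) (hself : ∀ i, B (p i) (p i) ≠ 0) {v : M}
    (hv : v ∈ Submodule.span R (Set.range p)) (h : ∀ i, B v (p i) = 0) : v = 0 := by
  obtain ⟨c, rfl⟩ := Finsupp.mem_span_range_iff_exists_finsupp.1 hv
  refine Finset.sum_eq_zero fun i hi ↦ ?_
  have hpair : B (c.sum fun j a ↦ a • p j) (p i) = c i * B (p i) (p i) := by
    rw [Finsupp.sum, BilinForm.sum_left, Finset.sum_eq_single_of_mem i hi
      fun j _ hji ↦ by rw [BilinForm.smul_left, hortho hji, mul_zero], BilinForm.smul_left]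
  have hc : c i = 0 := (mul_eq_zero.1 (hpair.symm.trans (h i))).resolve_right (hself i)
  simp only [hc, zero_smul]

end OrthogonalFamily

section ConjugateStep

variable {K V : Type*} [Field K] [AddCommGroup V] [Module K V]
variable {B : BilinForm K V} {f : Dual K V} {W : Submodule K V}

/-- The exact line search step `x + α p` of the method, with `α = r(x)ᵀp / B(p, p)`. The direction
`p` is meant to satisfy `B p p ≠ 0`; otherwise the step is trivial. -/
def conjugateStep (B : BilinForm K V) (f : Dual K V) (x p : V) : V :=
  x + (dualResidual B f x p / B p p) • p

lemma conjugateStep_mem {x p : V} (hx : x ∈ W) (hp : p ∈ W) : conjugateStep B f x p ∈ W :=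
  W.add_mem hx (W.smul_mem _ hp)

lemma dualResidual_conjugateStep_self {p : V} (hp : B p p ≠ 0) (x : V) :
    dualResidual B f (conjugateStep B f x p) p = 0 := by
  rw [conjugateStep, dualResidual_add_smul_apply, div_mul_cancel₀ _ hp, sub_self]

lemma dualResidual_conjugateStep_of_apply_eq_zero {p d : V} (h : B p d = 0) (x : V) :
    dualResidual B f (conjugateStep B f x p) d = dualResidual B f x d := by
  rw [conjugateStep, dualResidual_add_smul_apply, h, mul_zero, sub_zero]

/-- Restricted conjugate directions: pairwise `B`-orthogonal vectors of `W`. The paper's condition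
`p i ≠ 0` is encoded as `B (p i) (p i) ≠ 0`, which is the same for positive definite `B` and is what
the method needs for an arbitrary bilinear form. -/
structure IsRestrictedConjugate {ι : Type*} (B : BilinForm K V) (W : Submodule K V) (p : ι → V) :
    Prop where
  mem : ∀ i, p i ∈ W
  apply_self_ne_zero : ∀ i, B (p i) (p i) ≠ 0
  iIsOrtho : B.iIsOrtho p

namespace IsRestrictedConjugate

lemma span_range_eq {ι : Type*} [Fintype ι] [FiniteDimensional K W] {p : ι → V}
    (hp : IsRestrictedConjugate B W p) (hW : finrank K W = Fintype.card ι) :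
    Submodule.span K (Set.range p) = W := by
  have hli : LinearIndependent K p :=
    BilinForm.linearIndependent_of_iIsOrtho hp.iIsOrtho hp.apply_self_ne_zero
  refine Submodule.eq_of_le_of_finrank_eq ?_ ((finrank_span_eq_card hli).trans hW.symm)
  exact Submodule.span_le.2 (Set.range_subset_iff.2 hp.mem)

variable {q : ℕ} {p : Fin q → V} {x : ℕ → V}

lemma iterate_mem (hp : IsRestrictedConjugate B W p) (hx₀ : x 0 ∈ W)
    (hx : ∀ k : Fin q, x (k + 1) = conjugateStep B f (x k) (p k)) :
    ∀ k ≤ q, x k ∈ W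
  | 0, _ => hx₀
  | k + 1, hk => by
    rw [hx ⟨k, hk⟩]
    exact conjugateStep_mem (iterate_mem hp hx₀ hx k (Nat.le_of_succ_le hk)) (hp.mem _)

lemma dualResidual_iterate_apply_eq_zero (hp : IsRestrictedConjugate B W p)
    (hx : ∀ k : Fin q, x (k + 1) = conjugateStep B f (x k) (p k)) {k : ℕ} (hk : k ≤ q)
    {i : Fin q} (hi : i < k) : dualResidual B f (x k) (p i) = 0 := by
  induction k with
  | zero => exact absurd hi (Nat.not_lt_zero _)
  | succ k ih =>
    rw [hx ⟨k, hk⟩]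
    rcases eq_or_ne i ⟨k, hk⟩ with rfl | hne
    · exact dualResidual_conjugateStep_self (hp.apply_self_ne_zero _) _
    · have hik : (i : ℕ) < k := (Nat.le_of_lt_succ hi).lt_of_ne (Fin.val_ne_of_ne hne)
      rw [dualResidual_conjugateStep_of_apply_eq_zero (hp.iIsOrtho hne.symm)]
      exact ih (Nat.le_of_succ_le hk) hik

theorem iterate_eq_of_dualResidual_mem_dualAnnihilator [FiniteDimensional K W]
    (hp : IsRestrictedConjugate B W p) (hW : finrank K W = q) (hx₀ : x 0 ∈ W)
    (hx : ∀ k : Fin q, x (k + 1) = conjugateStep B f (x k) (p k))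
    {y : V} (hy : y ∈ W) (hres : dualResidual B f y ∈ W.dualAnnihilator) : x q = y := by
  have hspan : Submodule.span K (Set.range p) = W := hp.span_range_eq (by simpa using hW)
  have hmem : x q - y ∈ W := W.sub_mem (hp.iterate_mem hx₀ hx q le_rfl) hy
  refine sub_eq_zero.1 <| eq_zero_of_mem_span_range_of_iIsOrtho hp.iIsOrtho hp.apply_self_ne_zero
    (hspan ▸ hmem) fun i ↦ ?_
  have hxq : dualResidual B f (x q) (p i) = 0 :=
    hp.dualResidual_iterate_apply_eq_zero hx le_rfl i.isLt
  have hyi : dualResidual B f y (p i) = 0 := (Submodule.mem_dualAnnihilator _).1 hres _ (hp.mem i)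
  calc B (x q - y) (p i) = dualResidual B f y (p i) - dualResidual B f (x q) (p i) := by
        simp only [dualResidual_apply, BilinForm.sub_left]; ring
    _ = 0 := by rw [hxq, hyi, sub_zero]

end IsRestrictedConjugate

end ConjugateStep

section Objective

variable {K V : Type*} [Field K] [AddCommGroup V] [Module K V]

/-- The paper's objective `φ(x) = ½ xᵀSx - bᵀx`, for a bilinear form `B` in place of `S` and a
linear functional `f` in place of `b`. -/
def quadraticObjective (B : BilinForm K V) (f : Dual K V) (x : V) : K :=
  1 / 2 * B x x - f x

lemma quadraticObjective_add_smul [NeZero (2 : K)] {B : BilinForm K V} (hB : B.IsSymm)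
    (f : Dual K V) (x d : V) (t : K) :
    quadraticObjective B f (x + t • d) =
      quadraticObjective B f x - t * dualResidual B f x d + 1 / 2 * B d d * (t * t) := by
  simp only [quadraticObjective, dualResidual_apply, map_add, map_smul, LinearMap.add_apply,
    LinearMap.smul_apply, smul_eq_mul, hB.eq d x]
  field_simp
  ring

end Objective

section Minimizer

variable {K V : Type*} [Field K] [LinearOrder K] [IsStrictOrderedRing K] [AddCommGroup V]
  [Module K V] {B : BilinForm K V} {f : Dual K V} {W : Submodule K V}

lemma dualResidual_mem_dualAnnihilator_of_isMinOn (hB : B.IsSymm) {y : V} (hy : y ∈ W)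
    (hmin : IsMinOn (quadraticObjective B f) W y) : dualResidual B f y ∈ W.dualAnnihilator := by
  refine (Submodule.mem_dualAnnihilator _).2 fun d hd ↦ ?_
  have hnonneg (t : K) :
      0 ≤ 1 / 2 * B d d * (t * t) + -dualResidual B f y d * t + 0 := by
    have hle := isMinOn_iff.1 hmin (y + t • d) (W.add_mem hy (W.smul_mem t hd))
    rw [quadraticObjective_add_smul hB] at hle
    linarith
  have hsq : dualResidual B f y d ^ 2 ≤ 0 := by simpa [discrim] using discrim_le_zero hnonneg
  exact (sq_nonpos_iff _).1 hsq

theorem rcdm_finite_convergence_general [FiniteDimensional K W] (hB : B.IsSymm)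
    {q : ℕ} (hW : finrank K W = q) {p : Fin q → V} (hp : IsRestrictedConjugate B W p)
    {x : ℕ → V} (hx₀ : x 0 ∈ W)
    (hx : ∀ k : Fin q, x (k + 1) = conjugateStep B f (x k) (p k))
    {y : V} (hy : y ∈ W) (hmin : IsMinOn (quadraticObjective B f) W y) : x q = y :=
  hp.iterate_eq_of_dualResidual_mem_dualAnnihilator hW hx₀ hx hy
    (dualResidual_mem_dualAnnihilator_of_isMinOn hB hy hmin)

end Minimizer

section MatrixForm

variable {K n : Type*} [Field K] [Fintype n] [DecidableEq n]

lemma quadraticObjective_toBilin' (S : Matrix n n K) (b x : n → K) :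
    quadraticObjective S.toBilin' (dotProductEquiv K n b) x =
      1 / 2 * (x ⬝ᵥ S *ᵥ x) - b ⬝ᵥ x := by
  rw [quadraticObjective, toBilin'_apply', dotProductEquiv_apply_apply]

lemma conjugateStep_toBilin' {S : Matrix n n K} (hS : S.IsSymm) (b x p : n → K) :
    conjugateStep S.toBilin' (dotProductEquiv K n b) x p =
      x + (((b - S *ᵥ x) ⬝ᵥ p) / (p ⬝ᵥ S *ᵥ p)) • p := by
  have hsymm : x ⬝ᵥ S *ᵥ p = S *ᵥ x ⬝ᵥ p := by
    rw [dotProduct_mulVec, ← mulVec_transpose, hS.eq]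
  rw [conjugateStep, dualResidual_apply, toBilin'_apply', toBilin'_apply',
    dotProductEquiv_apply_apply, hsymm, sub_dotProduct]

lemma isRestrictedConjugate_toBilin' {ι : Type*} {S : Matrix n n ℝ} (hS : S.PosDef)
    {W : Submodule ℝ (n → ℝ)} {p : ι → n → ℝ} (hne : ∀ i, p i ≠ 0) (hmem : ∀ i, p i ∈ W)
    (hconj : ∀ i j, i ≠ j → p i ⬝ᵥ S *ᵥ p j = 0) : IsRestrictedConjugate S.toBilin' W p where
  mem := hmem
  apply_self_ne_zero i := by
    rw [toBilin'_apply']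
    exact (hS.dotProduct_mulVec_pos (hne i)).ne'
  iIsOrtho := BilinForm.iIsOrtho_def.2 fun i j hij ↦ by
    rw [toBilin'_apply', hconj i j hij]

end MatrixForm

/-- Finite convergence of the restricted conjugate direction method (RCDM):
given an initial vector `x₀ ∈ R(C)` and restricted conjugate directions
`p₀, …, p_{q−1}` (`q = rank C`), the RCDM iterates reach the unique minimizer
`x*_C` of `φ(x) = (1/2) xᵀSx − bᵀx` over `R(C)` in at most `q` steps: `x_q = x*_C`. -/
theorem rcdm_finite_convergence
    (n m : ℕ) (hn : 0 < n) (hm : 0 < m)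
    (S : Matrix (Fin n) (Fin n) ℝ) (hS : S.PosDef)
    (C : Matrix (Fin n) (Fin m) ℝ) (b : Fin n → ℝ)
    (q : ℕ) (hq : q = C.rank)
    (p : Fin q → (Fin n → ℝ))
    (hpnz : ∀ k, p k ≠ 0)
    (hpR : ∀ k, p k ∈ LinearMap.range C.mulVecLin)
    (hconj : ∀ i j, i ≠ j → p i ⬝ᵥ S.mulVec (p j) = 0)
    (x : ℕ → (Fin n → ℝ))
    (hx0 : x 0 ∈ LinearMap.range C.mulVecLin)
    (hrec : ∀ (k : ℕ) (hk : k < q),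
        x (k + 1) = x k +
          (((b - S.mulVec (x k)) ⬝ᵥ p ⟨k, hk⟩) /
            (p ⟨k, hk⟩ ⬝ᵥ S.mulVec (p ⟨k, hk⟩))) • p ⟨k, hk⟩)
    (xstar : Fin n → ℝ)
    (hmem : xstar ∈ LinearMap.range C.mulVecLin)
    (hmin : ∀ z ∈ LinearMap.range C.mulVecLin,
        (1 / 2 : ℝ) * (xstar ⬝ᵥ S.mulVec xstar) - b ⬝ᵥ xstar ≤
          (1 / 2 : ℝ) * (z ⬝ᵥ S.mulVec z) - b ⬝ᵥ z) :
    x q = xstar := by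
  have hSymm : S.IsSymm := isHermitian_iff_isSymm.1 hS.isHermitian
  exact rcdm_finite_convergence_general (f := dotProductEquiv ℝ (Fin n) b)
    (isSymm_toBilin'_iff_isSymm.2 hSymm) hq.symm (isRestrictedConjugate_toBilin' hS hpnz hpR hconj)
    hx0 (fun k ↦ (hrec k k.isLt).trans (conjugateStep_toBilin' hSymm b _ _).symm) hmem
    (isMinOn_iff.2 fun z hz ↦ by simpa only [quadraticObjective_toBilin'] using hmin z hz)
end

section
/- (Krylov subspace characterization of the ReK method.) For every k = 0, 1, …, q−1 for which the ReK directions p₀, …, p_k are nonzero, the three subspaces coincide: K_C(r₀; k) = span{Π_C r₀, Π_C r₁, …, Π_C r_k} = span{p₀, p₁, …, p_k}. -/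
open Matrix

/-!
Write `g k = P (r k)`, so that `g (k + 1) = g k - α k • P S (p k)`. The recurrence for the
directions identifies the spans of the `g i` and the `p i`, and the one for `g` keeps `g k` in the
Krylov subspace. Conversely, `P S` has to send `p k` into the span of `g 0, …, g (k + 1)`. When
`α k ≠ 0`, solve for `P S (p k)`. Otherwise, the exact line search, which makes `r (k + 1)`
orthogonal to `p k` and hence `⟨p k, r k⟩ = ⟨P (r k), r k⟩`, shows `g k = 0`; then `p k` is a
multiple of `p (k - 1)` (zero if `k = 0`), and the claim is inherited from the previous step.
-/

section InitialSpan

variable {R V : Type*} [Semiring R] [AddCommMonoid V] [Module R V] {f g : ℕ → V}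

variable (R) in
/-- The span of the terms `f 0, …, f k` of a sequence, both ends included. -/
def initialSpan (f : ℕ → V) (k : ℕ) : Submodule R V :=
  Submodule.span R (Set.range fun i : Fin (k + 1) => f i)

lemma mem_initialSpan {i k : ℕ} (h : i ≤ k) : f i ∈ initialSpan R f k :=
  Submodule.subset_span ⟨⟨i, Nat.lt_succ_of_le h⟩, rfl⟩

lemma initialSpan_le {k : ℕ} {W : Submodule R V} (h : ∀ i ≤ k, f i ∈ W) :
    initialSpan R f k ≤ W :=
  Submodule.span_le.2 <| Set.range_subset_iff.2 fun i => h i (Nat.le_of_lt_succ i.isLt)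

lemma initialSpan_mono : Monotone (initialSpan R f) :=
  fun _ _ hkl => initialSpan_le fun _ hi => mem_initialSpan (hi.trans hkl)

lemma initialSpan_le_initialSpan (h : ∀ i, f i ∈ initialSpan R g i) (k : ℕ) :
    initialSpan R f k ≤ initialSpan R g k :=
  initialSpan_le fun i hi => initialSpan_mono hi (h i)

lemma initialSpan_le_comap_succ {A : Module.End R V} (hA : ∀ i, A (g i) ∈ initialSpan R g (i + 1))
    (k : ℕ) : initialSpan R g k ≤ (initialSpan R g (k + 1)).comap A :=
  initialSpan_le fun i hi => initialSpan_mono (Nat.succ_le_succ hi) (hA i)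

/-- The Krylov subspace spanned by `v, A v, …, A ^ k v`. -/
def krylovSubspace (A : Module.End R V) (v : V) (k : ℕ) : Submodule R V :=
  initialSpan R (fun j => (A ^ j) v) k

lemma self_mem_krylovSubspace (A : Module.End R V) (v : V) (k : ℕ) : v ∈ krylovSubspace A v k :=
  mem_initialSpan (f := fun j => (A ^ j) v) k.zero_le

lemma krylovSubspace_mono (A : Module.End R V) (v : V) : Monotone (krylovSubspace A v) :=
  initialSpan_mono

lemma krylovSubspace_le_comap_succ (A : Module.End R V) (v : V) (k : ℕ) :
    krylovSubspace A v k ≤ (krylovSubspace A v (k + 1)).comap A :=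
  initialSpan_le_comap_succ (fun j => by
    rw [← Module.End.mul_apply, ← pow_succ']
    exact mem_initialSpan (f := fun j => (A ^ j) v) le_rfl) k

lemma krylovSubspace_le_initialSpan {A : Module.End R V} {v : V} (hv : v ∈ initialSpan R g 0)
    (hA : ∀ i, A (g i) ∈ initialSpan R g (i + 1)) (k : ℕ) :
    krylovSubspace A v k ≤ initialSpan R g k := by
  refine initialSpan_le_initialSpan (fun j => ?_) k
  induction j with
  | zero => exact hv
  | succ j ih =>
    rw [pow_succ', Module.End.mul_apply]
    exact initialSpan_le_comap_succ hA j ih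

lemma krylovSubspace_toLin' {R ι : Type*} [CommSemiring R] [Fintype ι] [DecidableEq ι]
    (M : Matrix ι ι R) (v : ι → R) (k : ℕ) :
    krylovSubspace M.toLin' v k = initialSpan R (fun j => (M ^ j) *ᵥ v) k := by
  simp only [krylovSubspace, ← toLin'_pow, toLin'_apply]

end InitialSpan

section Recurrence

lemma initialSpan_residuals_eq_initialSpan_directions {R V : Type*} [Ring R] [AddCommGroup V]
    [Module R V] {g p : ℕ → V} {β : ℕ → R} (hp0 : p 0 = g 0)
    (hp : ∀ k, p (k + 1) = g (k + 1) + β k • p k) (k : ℕ) :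
    initialSpan R g k = initialSpan R p k := by
  refine le_antisymm (initialSpan_le_initialSpan (fun i => ?_) k)
    (initialSpan_le_initialSpan (fun i => ?_) k)
  · cases i with
    | zero => exact hp0 ▸ mem_initialSpan le_rfl
    | succ i =>
      rw [eq_sub_of_add_eq (hp i).symm]
      exact sub_mem (mem_initialSpan le_rfl)
        (Submodule.smul_mem _ _ (mem_initialSpan i.le_succ))
  · induction i with
    | zero => exact hp0 ▸ mem_initialSpan le_rfl
    | succ i ih =>
      rw [hp]
      exact add_mem (mem_initialSpan le_rfl)
        (Submodule.smul_mem _ _ (initialSpan_mono i.le_succ ih))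

lemma initialSpan_residuals_le_krylovSubspace {R V : Type*} [Ring R] [AddCommGroup V]
    [Module R V] {A : Module.End R V} {g p : ℕ → V} {α β : ℕ → R} (hp0 : p 0 = g 0)
    (hp : ∀ k, p (k + 1) = g (k + 1) + β k • p k)
    (hg : ∀ k, g (k + 1) = g k - α k • A (p k)) (k : ℕ) :
    initialSpan R g k ≤ krylovSubspace A (g 0) k := by
  have residual_and_direction_mem :
      ∀ i, g i ∈ krylovSubspace A (g 0) i ∧ p i ∈ krylovSubspace A (g 0) i := by
    intro i
    induction i with
    | zero => exact ⟨self_mem_krylovSubspace A _ 0, hp0 ▸ self_mem_krylovSubspace A _ 0⟩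
    | succ i ih =>
      have residual_mem : g (i + 1) ∈ krylovSubspace A (g 0) (i + 1) := by
        rw [hg]
        exact sub_mem (krylovSubspace_mono A _ i.le_succ ih.1)
          (Submodule.smul_mem _ _ (krylovSubspace_le_comap_succ A _ i ih.2))
      refine ⟨residual_mem, ?_⟩
      rw [hp]
      exact add_mem residual_mem
        (Submodule.smul_mem _ _ (krylovSubspace_mono A _ i.le_succ ih.2))
  exact initialSpan_le fun i hi => krylovSubspace_mono A _ hi (residual_and_direction_mem i).1

variable {K V : Type*} [DivisionRing K] [AddCommGroup V] [Module K V]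
  {A : Module.End K V} {g p : ℕ → V} {α β : ℕ → K}

lemma apply_direction_mem_initialSpan_residuals (hp0 : p 0 = g 0)
    (hp : ∀ k, p (k + 1) = g (k + 1) + β k • p k)
    (hg : ∀ k, g (k + 1) = g k - α k • A (p k)) (hα : ∀ k, α k = 0 → g k = 0) (k : ℕ) :
    A (p k) ∈ initialSpan K g (k + 1) := by
  have mem_of_step_ne_zero : ∀ i, α i ≠ 0 → A (p i) ∈ initialSpan K g (i + 1) := by
    intro i hi
    have apply_direction_eq : A (p i) = (α i)⁻¹ • (g i - g (i + 1)) := by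
      rw [hg, sub_sub_cancel, inv_smul_smul₀ hi]
    rw [apply_direction_eq]
    exact Submodule.smul_mem _ _ (sub_mem (mem_initialSpan i.le_succ) (mem_initialSpan le_rfl))
  induction k with
  | zero =>
    by_cases h : α 0 = 0
    · simp only [hp0, hα 0 h, map_zero, zero_mem]
    · exact mem_of_step_ne_zero 0 h
  | succ k ih =>
    by_cases h : α (k + 1) = 0
    · rw [hp, hα (k + 1) h, zero_add, map_smul]
      exact Submodule.smul_mem _ _ (initialSpan_mono (k + 1).le_succ ih)
    · exact mem_of_step_ne_zero (k + 1) h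

theorem krylovSubspace_eq_initialSpan_residuals (hp0 : p 0 = g 0)
    (hp : ∀ k, p (k + 1) = g (k + 1) + β k • p k)
    (hg : ∀ k, g (k + 1) = g k - α k • A (p k)) (hα : ∀ k, α k = 0 → g k = 0) (k : ℕ) :
    krylovSubspace A (g 0) k = initialSpan K g k := by
  have initialSpan_eq := initialSpan_residuals_eq_initialSpan_directions hp0 hp
  refine le_antisymm ?_ (initialSpan_residuals_le_krylovSubspace hp0 hp hg k)
  rw [initialSpan_eq]
  refine krylovSubspace_le_initialSpan (hp0 ▸ mem_initialSpan le_rfl) (fun i => ?_) k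
  rw [← initialSpan_eq]
  exact apply_direction_mem_initialSpan_residuals hp0 hp hg hα i

end Recurrence

section LineSearch

lemma posSemidef_of_isHermitian_of_isIdempotentElem {R ι : Type*} [Ring R] [PartialOrder R]
    [StarRing R] [StarOrderedRing R] [Fintype ι] {P : Matrix ι ι R} (hP : P.IsHermitian)
    (hidem : IsIdempotentElem P) : P.PosSemidef := by
  have eq_conjTranspose_mul_self : P = Pᴴ * P := by rw [hP.eq, hidem.eq]
  rw [eq_conjTranspose_mul_self]
  exact posSemidef_conjTranspose_mul_self P

lemma star_direction_dotProduct_residual {R ι : Type*} [CommRing R] [StarRing R] [Fintype ι]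
    {S P : Matrix ι ι R} {p r : ℕ → ι → R} {α β : ℕ → R} (hp0 : p 0 = P *ᵥ r 0)
    (hp : ∀ k, p (k + 1) = P *ᵥ r (k + 1) + β k • p k)
    (hr : ∀ k, r (k + 1) = r k - α k • S *ᵥ p k)
    (hα : ∀ k, α k * (star (p k) ⬝ᵥ S *ᵥ p k) = star (p k) ⬝ᵥ r k) (k : ℕ) :
    star (p k) ⬝ᵥ r k = star (P *ᵥ r k) ⬝ᵥ r k := by
  cases k with
  | zero => rw [hp0]
  | succ k =>
    have orthogonal : star (p k) ⬝ᵥ r (k + 1) = 0 := by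
      rw [hr, dotProduct_sub, dotProduct_smul, smul_eq_mul, hα, sub_self]
    rw [hp, star_add, star_smul, add_dotProduct, smul_dotProduct, orthogonal, smul_zero, add_zero]

open scoped ComplexOrder in
lemma mulVec_residual_eq_zero_of_step_eq_zero {𝕜 ι : Type*} [RCLike 𝕜] [Fintype ι]
    {S P : Matrix ι ι 𝕜} {p r : ℕ → ι → 𝕜} {α β : ℕ → 𝕜} (hP : P.PosSemidef)
    (hp0 : p 0 = P *ᵥ r 0)
    (hp : ∀ k, p (k + 1) = P *ᵥ r (k + 1) + β k • p k)
    (hr : ∀ k, r (k + 1) = r k - α k • S *ᵥ p k)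
    (hα : ∀ k, α k * (star (p k) ⬝ᵥ S *ᵥ p k) = star (p k) ⬝ᵥ r k) {k : ℕ} (hk : α k = 0) :
    P *ᵥ r k = 0 := by
  rw [← hP.dotProduct_mulVec_zero_iff, ← star_eq_zero, ← star_dotProduct,
    ← star_direction_dotProduct_residual hp0 hp hr hα, ← hα, hk, zero_mul]

lemma dotProduct_div_mul_cancel_of_posDef {ι : Type*} [Fintype ι] {S : Matrix ι ι ℝ}
    (hS : S.PosDef) (u v : ι → ℝ) :
    u ⬝ᵥ v / (v ⬝ᵥ S *ᵥ v) * (v ⬝ᵥ S *ᵥ v) = v ⬝ᵥ u := by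
  rw [dotProduct_comm u v]
  refine div_mul_cancel_of_imp fun hv => ?_
  have hv0 : v = 0 := by
    by_contra hne
    exact (hS.dotProduct_mulVec_pos hne).ne' (by rwa [star_trivial])
  rw [hv0, zero_dotProduct]

end LineSearch

open scoped ComplexOrder in
theorem rek_krylov_subspace_characterization_general {𝕜 ι : Type*} [RCLike 𝕜] [Fintype ι]
    [DecidableEq ι] (S P : Matrix ι ι 𝕜) (hP : P.PosSemidef) (b : ι → 𝕜) (x p r : ℕ → ι → 𝕜)
    (α β : ℕ → 𝕜) (hr : ∀ k, r k = b - S *ᵥ x k) (hp0 : p 0 = P *ᵥ r 0)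
    (hp : ∀ k, p (k + 1) = P *ᵥ r (k + 1) + β k • p k)
    (hx : ∀ k, x (k + 1) = x k + α k • p k)
    (hα : ∀ k, α k * (star (p k) ⬝ᵥ S *ᵥ p k) = star (p k) ⬝ᵥ r k) (k : ℕ) :
    initialSpan 𝕜 (fun j => ((P * S) ^ j) *ᵥ P *ᵥ r 0) k = initialSpan 𝕜 (fun i => P *ᵥ r i) k ∧
      initialSpan 𝕜 (fun i => P *ᵥ r i) k = initialSpan 𝕜 p k := by
  have residual_succ : ∀ i, r (i + 1) = r i - α i • S *ᵥ p i := fun i => by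
    rw [hr (i + 1), hx, mulVec_add, mulVec_smul, ← sub_sub, ← hr i]
  have projected_succ : ∀ i, P *ᵥ r (i + 1) = P *ᵥ r i - α i • (P * S).toLin' (p i) := fun i => by
    rw [residual_succ, mulVec_sub, mulVec_smul, mulVec_mulVec, toLin'_apply]
  refine ⟨?_, initialSpan_residuals_eq_initialSpan_directions hp0 hp k⟩
  rw [← krylovSubspace_toLin']
  exact krylovSubspace_eq_initialSpan_residuals (g := fun i => P *ᵥ r i) hp0 hp projected_succ
    (fun _ => mulVec_residual_eq_zero_of_step_eq_zero hP hp0 hp residual_succ hα) k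

/-- Krylov subspace characterization of the ReK method: for every `k < q` such that
the ReK directions `p₀, …, p_k` are nonzero, the restricted Krylov subspace
`K_C(r₀; k)`, the span of the projected residuals `Π_C r₀, …, Π_C r_k`, and the span of
the directions `p₀, …, p_k` all coincide. -/
theorem rek_krylov_subspace_characterization
    (n m : ℕ) (hn : 0 < n) (hm : 0 < m)
    (S : Matrix (Fin n) (Fin n) ℝ) (hS : S.PosDef)
    (C : Matrix (Fin n) (Fin m) ℝ) (b : Fin n → ℝ)
    (q : ℕ) (hq : q = C.rank)
    (Pr : Matrix (Fin n) (Fin n) ℝ)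
    (hPrSym : Prᵀ = Pr) (hPrIdem : Pr * Pr = Pr)
    (hPrRange : LinearMap.range Pr.mulVecLin = LinearMap.range C.mulVecLin)
    (x p r : ℕ → (Fin n → ℝ))
    (hr : ∀ k, r k = b - S.mulVec (x k))
    (hx0 : x 0 ∈ LinearMap.range C.mulVecLin)
    (hp0 : p 0 = Pr.mulVec (r 0))
    (hprec : ∀ k : ℕ, p (k + 1) = Pr.mulVec (r (k + 1)) +
        (-(r (k + 1) ⬝ᵥ Pr.mulVec (S.mulVec (p k))) / (p k ⬝ᵥ S.mulVec (p k))) • p k)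
    (hxrec : ∀ k : ℕ, x (k + 1) = x k +
        ((r k ⬝ᵥ p k) / (p k ⬝ᵥ S.mulVec (p k))) • p k) :
    ∀ k : ℕ, k < q → (∀ i, i ≤ k → p i ≠ 0) →
      (Submodule.span ℝ (Set.range fun j : Fin (k + 1) =>
            ((Pr * S) ^ (j : ℕ)).mulVec (Pr.mulVec (r 0))) =
          Submodule.span ℝ (Set.range fun i : Fin (k + 1) => Pr.mulVec (r i)) ∧
        Submodule.span ℝ (Set.range fun i : Fin (k + 1) => Pr.mulVec (r i)) =
          Submodule.span ℝ (Set.range fun i : Fin (k + 1) => p i)) := by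
  intro k _ _
  have hP := posSemidef_of_isHermitian_of_isIdempotentElem
    ((conjTranspose_eq_transpose_of_trivial Pr).trans hPrSym) hPrIdem
  exact rek_krylov_subspace_characterization_general S Pr hP b x p r _ _ hr hp0 hprec hxrec
    (fun i => dotProduct_div_mul_cancel_of_posDef hS (r i) (p i)) k
end

section
/- (Conjugacy of the ReK directions.) If the ReK directions p₀, p₁, …, p_{q−1} are all nonzero, then they form a set of restricted conjugate directions: each p_k lies in R(C), and p_kᵀ S p_i = 0 for all 0 ≤ i ≠ k ≤ q−1. -/
open Matrix

/-!
The projected residual `P r_k` is a combination of `p_k` and `p_{k-1}`, so a vector orthogonal to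
`p_0, …, p_k` is orthogonal to `P r_k`. The step length makes `r_{k+1}` orthogonal to `p_k`, and
conjugacy of the earlier directions propagates this to `p_0, …, p_k`. The coefficient `β` makes
`p_{k+1}` conjugate to `p_k`. For `i < k`, the vector `P S p_i` is a multiple of
`P r_i - P r_{i+1}`, to which `r_{k+1}` is orthogonal, so `p_{k+1}` is conjugate to `p_i` as well.
Dividing by the step length here is legitimate: were `r_i` orthogonal to `p_i`, then `P r_i` would
be orthogonal to itself, hence zero, and `p_i` would vanish.
-/

section ReK

variable {K V : Type*} [Field K] [AddCommGroup V] [Module K V]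

/-- The sequences `x`, `r`, `p` are the iterates, residuals and directions of the restricted Krylov
method for `S x = b`, with inner product `B` and restriction to the range of `P`. Operators and a
bilinear form stand for the matrices and the dot product; that `P` is an orthogonal projection is
not part of the structure. Where `B (p k) (S (p k)) = 0` both coefficients have the junk value
`0`. -/
structure IsReKIteration (B : LinearMap.BilinForm K V) (S P : Module.End K V) (b : V)
    (x r p : ℕ → V) : Prop where
  residual_eq : ∀ k, r k = b - S (x k)
  direction_zero : p 0 = P (r 0)
  direction_succ : ∀ k, p (k + 1) = P (r (k + 1)) +
    (-(B (r (k + 1)) (P (S (p k)))) / B (p k) (S (p k))) • p k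
  iterate_succ : ∀ k, x (k + 1) = x k + (B (r k) (p k) / B (p k) (S (p k))) • p k

namespace IsReKIteration

variable {B : LinearMap.BilinForm K V} {S P : Module.End K V} {b : V} {x r p : ℕ → V}

theorem residual_succ (h : IsReKIteration B S P b x r p) (k : ℕ) :
    r (k + 1) = r k - (B (r k) (p k) / B (p k) (S (p k))) • S (p k) := by
  rw [h.residual_eq (k + 1), h.iterate_succ, map_add, map_smul, ← sub_sub, ← h.residual_eq]

theorem direction_mem_range (h : IsReKIteration B S P b x r p) (k : ℕ) :
    p k ∈ LinearMap.range P := by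
  induction k with
  | zero => exact h.direction_zero ▸ LinearMap.mem_range_self P _
  | succ k ih =>
    rw [h.direction_succ]
    exact add_mem (LinearMap.mem_range_self P _) (Submodule.smul_mem _ _ ih)

theorem apply_projected_residual_eq_zero (h : IsReKIteration B S P b x r p) {w : V} {k : ℕ}
    (hw : ∀ i ≤ k, B w (p i) = 0) : B w (P (r k)) = 0 := by
  cases k with
  | zero => exact h.direction_zero ▸ hw 0 le_rfl
  | succ k =>
    have hp := hw (k + 1) le_rfl
    rwa [h.direction_succ, map_add, map_smul, hw k k.le_succ, smul_zero, add_zero] at hp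

theorem direction_eq_zero_of_projected_residual_eq_zero (h : IsReKIteration B S P b x r p)
    (hP : B.IsSelfAdjoint P) {k : ℕ} (hk : P (r k) = 0) : p k = 0 := by
  cases k with
  | zero => rw [h.direction_zero, hk]
  | succ k =>
    rw [h.direction_succ, ← hP (r (k + 1)), hk, map_zero, LinearMap.zero_apply, neg_zero, zero_div,
      zero_smul, add_zero]

theorem direction_eq_zero_of_residual_orthogonal (h : IsReKIteration B S P b x r p)
    (hB : ∀ v, B v v = 0 → v = 0) (hP : B.IsSelfAdjoint P) (hPP : IsIdempotentElem P) {k : ℕ}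
    (hr : ∀ i ≤ k, B (r k) (p i) = 0) : p k = 0 := by
  refine h.direction_eq_zero_of_projected_residual_eq_zero hP (hB _ ?_)
  calc B (P (r k)) (P (r k)) = B (r k) ((P * P) (r k)) := hP _ _
    _ = B (r k) (P (r k)) := by rw [hPP.eq]
    _ = 0 := h.apply_projected_residual_eq_zero hr

theorem residual_succ_orthogonal (h : IsReKIteration B S P b x r p) (hS : B.IsSelfAdjoint S)
    {k : ℕ} (hk : B (p k) (S (p k)) ≠ 0) (hr : ∀ i < k, B (r k) (p i) = 0)
    (hp : ∀ i < k, B (p k) (S (p i)) = 0) : ∀ i ≤ k, B (r (k + 1)) (p i) = 0 := by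
  intro i hi
  rw [h.residual_succ, map_sub, map_smul, LinearMap.sub_apply, LinearMap.smul_apply, hS,
    smul_eq_mul]
  obtain hlt | rfl := hi.lt_or_eq
  · rw [hr i hlt, hp i hlt, mul_zero, sub_zero]
  · rw [div_mul_cancel₀ _ hk, sub_self]

theorem direction_succ_conjugate_self (h : IsReKIteration B S P b x r p) (hP : B.IsSelfAdjoint P)
    {k : ℕ} (hk : B (p k) (S (p k)) ≠ 0) : B (p (k + 1)) (S (p k)) = 0 := by
  rw [h.direction_succ, map_add, map_smul, LinearMap.add_apply, LinearMap.smul_apply, hP,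
    smul_eq_mul, div_mul_cancel₀ _ hk, add_neg_cancel]

theorem apply_projected_image_direction_eq_zero (h : IsReKIteration B S P b x r p) {w : V} {i : ℕ}
    (hi : B (p i) (S (p i)) ≠ 0) (hri : B (r i) (p i) ≠ 0)
    (hw : ∀ j ≤ i + 1, B w (p j) = 0) : B w (P (S (p i))) = 0 := by
  have h_curr : B w (P (r i)) = 0 :=
    h.apply_projected_residual_eq_zero fun j hj => hw j (hj.trans i.le_succ)
  have h_next : B w (P (r (i + 1))) = 0 := h.apply_projected_residual_eq_zero hw
  rw [h.residual_succ, map_sub, map_sub, map_smul, map_smul, h_curr, zero_sub,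
    neg_eq_zero] at h_next
  exact (smul_eq_zero.mp h_next).resolve_left (div_ne_zero hri hi)

theorem orthogonal_and_conjugate_of_lt (h : IsReKIteration B S P b x r p)
    (hB : ∀ v, B v v = 0 → v = 0) (hS : B.IsSelfAdjoint S) (hP : B.IsSelfAdjoint P)
    (hPP : IsIdempotentElem P) {k : ℕ} (hpk : ∀ i < k, B (p i) (S (p i)) ≠ 0) :
    ∀ i < k, B (r k) (p i) = 0 ∧ B (p k) (S (p i)) = 0 := by
  induction k using Nat.strong_induction_on with | _ k ih
  obtain _ | k := k
  · exact fun i hi => absurd hi i.not_lt_zero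
  have prev : ∀ j ≤ k, ∀ i < j, B (r j) (p i) = 0 ∧ B (p j) (S (p i)) = 0 := fun j hj =>
    ih j (by lia) fun i hi => hpk i (by lia)
  have residual_ne : ∀ i ≤ k, B (r i) (p i) ≠ 0 := by
    intro i hi hri
    have hr : ∀ j ≤ i, B (r i) (p j) = 0 := fun j hj =>
      hj.lt_or_eq.elim (fun hlt => (prev i hi j hlt).1) fun heq => heq ▸ hri
    have hpi : p i = 0 := h.direction_eq_zero_of_residual_orthogonal hB hP hPP hr
    exact hpk i (by lia) (by rw [hpi, map_zero, LinearMap.zero_apply])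
  have orthogonal : ∀ i ≤ k, B (r (k + 1)) (p i) = 0 :=
    h.residual_succ_orthogonal hS (hpk k k.lt_succ_self) (fun i hi => (prev k le_rfl i hi).1)
      fun i hi => (prev k le_rfl i hi).2
  intro i hi
  refine ⟨orthogonal i (by lia), ?_⟩
  obtain hlt | rfl := (Nat.le_of_lt_succ hi).lt_or_eq
  · have image_orthogonal : B (r (k + 1)) (P (S (p i))) = 0 :=
      h.apply_projected_image_direction_eq_zero (hpk i hi) (residual_ne i (by lia))
        fun j hj => orthogonal j (by lia)
    rw [h.direction_succ, map_add, map_smul, LinearMap.add_apply, LinearMap.smul_apply, hP,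
      image_orthogonal, (prev k le_rfl i hlt).2, smul_zero, add_zero]
  · exact h.direction_succ_conjugate_self hP (hpk i hi)

end IsReKIteration

theorem rek_directions_conjugate_general {B : LinearMap.BilinForm K V} (hBsymm : B.IsSymm)
    (hB : ∀ v, B v v = 0 → v = 0) {S P : Module.End K V} (hS : B.IsSelfAdjoint S)
    (hP : B.IsSelfAdjoint P) (hPP : IsIdempotentElem P) {b : V} {x r p : ℕ → V}
    (h : IsReKIteration B S P b x r p) {q : ℕ} (hp : ∀ k < q, B (p k) (S (p k)) ≠ 0) :
    (∀ k, p k ∈ LinearMap.range P) ∧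
      (∀ i k, i < q → k < q → i ≠ k → B (p k) (S (p i)) = 0) := by
  have conjugate_of_lt : ∀ k < q, ∀ i < k, B (p k) (S (p i)) = 0 := fun k hk i hi =>
    (h.orthogonal_and_conjugate_of_lt hB hS hP hPP (fun j hj => hp j (hj.trans hk)) i hi).2
  refine ⟨h.direction_mem_range, fun i k hi hk hik => ?_⟩
  obtain hlt | hgt := hik.lt_or_gt
  · exact conjugate_of_lt k hk i hlt
  · rw [← hS, hBsymm.eq]
    exact conjugate_of_lt i hi k hgt

end ReK

theorem isSelfAdjoint_mulVecLin_of_isSymm {R ι : Type*} [CommSemiring R] [Fintype ι]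
    {A : Matrix ι ι R} (hA : A.IsSymm) :
    LinearMap.IsSelfAdjoint (dotProductBilin R R) A.mulVecLin := fun u v => by
  change A *ᵥ u ⬝ᵥ v = u ⬝ᵥ A *ᵥ v
  rw [dotProduct_mulVec, ← mulVec_transpose, hA.eq]

/-- Conjugacy of the ReK directions: if the ReK directions `p₀, …, p_{q−1}` are all
nonzero, then they form a set of restricted conjugate directions: each `p_k` lies in
`R(C)`, and `p_kᵀ S p_i = 0` for all `0 ≤ i ≠ k ≤ q − 1`. -/
theorem rek_directions_conjugate
    (n m : ℕ) (hn : 0 < n) (hm : 0 < m)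
    (S : Matrix (Fin n) (Fin n) ℝ) (hS : S.PosDef)
    (C : Matrix (Fin n) (Fin m) ℝ) (b : Fin n → ℝ)
    (q : ℕ) (hq : q = C.rank)
    (Pr : Matrix (Fin n) (Fin n) ℝ)
    (hPrSym : Prᵀ = Pr) (hPrIdem : Pr * Pr = Pr)
    (hPrRange : LinearMap.range Pr.mulVecLin = LinearMap.range C.mulVecLin)
    (x p r : ℕ → (Fin n → ℝ))
    (hr : ∀ k, r k = b - S.mulVec (x k))
    (hx0 : x 0 ∈ LinearMap.range C.mulVecLin)
    (hp0 : p 0 = Pr.mulVec (r 0))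
    (hprec : ∀ k : ℕ, p (k + 1) = Pr.mulVec (r (k + 1)) +
        (-(r (k + 1) ⬝ᵥ Pr.mulVec (S.mulVec (p k))) / (p k ⬝ᵥ S.mulVec (p k))) • p k)
    (hxrec : ∀ k : ℕ, x (k + 1) = x k +
        ((r k ⬝ᵥ p k) / (p k ⬝ᵥ S.mulVec (p k))) • p k)
    (hpnz : ∀ k, k < q → p k ≠ 0) :
    (∀ k, k < q → p k ∈ LinearMap.range C.mulVecLin) ∧
      (∀ i k, i < q → k < q → i ≠ k → p k ⬝ᵥ S.mulVec (p i) = 0) := by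
  have hSadj := isSelfAdjoint_mulVecLin_of_isSymm (isHermitian_iff_isSymm.mp hS.isHermitian)
  have hPrAdj := isSelfAdjoint_mulVecLin_of_isSymm hPrSym
  have hPrIdemLin : IsIdempotentElem Pr.mulVecLin :=
    (mulVecLin_mul Pr Pr).symm.trans (congrArg mulVecLin hPrIdem)
  obtain ⟨hmem, hconj⟩ := rek_directions_conjugate_general (B := dotProductBilin ℝ ℝ)
    (q := q) ⟨dotProduct_comm⟩ (fun _ => dotProduct_self_eq_zero.mp) hSadj hPrAdj hPrIdemLin
    ⟨hr, hp0, hprec, hxrec⟩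
    fun k hk => (hS.dotProduct_mulVec_pos (hpnz k hk)).ne'
  exact ⟨fun k _ => hPrRange ▸ hmem k, hconj⟩
end

section
/- (Simplified coefficient formulas for the ReK method.) If the ReK directions p₀, p₁, …, p_{q−1} are all nonzero, then the coefficients of the ReK iteration satisfy α_k = (r_kᵀ Π_C r_k)/(p_kᵀ S p_k) for k = 0, 1, …, q−1, and β_{k+1} = (r_{k+1}ᵀ Π_C r_{k+1})/(r_kᵀ Π_C r_k) for k = 0, 1, …, q−2. -/
open Matrix

/-!
Let `M` be a symmetric preconditioner; the restricted Krylov method has `M = Π_C`. The residual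
update `r (k + 1) = r k - α k • S (p k)` makes `r (k + 1)` orthogonal to `p k`, so only the
component `M (r k)` of the direction `p k` contributes to `r k ⬝ᵥ p k`; this is the formula for
`α k`. Conjugacy of consecutive directions extends the orthogonality to `r (k + 2)` and `p k`, and
therefore `r (k + 1) ⬝ᵥ M (r k) = 0`. Applying `M` to the residual update and pairing with
`r (k + 1)` then gives the formula for `β (k + 1)`. Its denominator `r k ⬝ᵥ M (r k)` is nonzero
because, for `M` positive semidefinite, its vanishing forces `M (r k) = 0` and hence `p k = 0`.
-/

theorem dotProduct_mulVec_comm_of_isSymm {ι R : Type*} [Fintype ι] [CommSemiring R]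
    {A : Matrix ι ι R} (hA : A.IsSymm) (u v : ι → R) : u ⬝ᵥ A *ᵥ v = v ⬝ᵥ A *ᵥ u := by
  rw [← dotProduct_transpose_mulVec, hA.eq]

theorem posSemidef_of_isStarProjection {ι R : Type*} [Fintype ι] [Ring R] [PartialOrder R]
    [StarRing R] [StarOrderedRing R] {P : Matrix ι ι R} (hP : IsStarProjection P) :
    P.PosSemidef := by
  have hfactor : Pᴴ * P = P := by
    rw [← star_eq_conjTranspose, hP.isSelfAdjoint.star_eq, hP.isIdempotentElem.eq]
  exact hfactor ▸ posSemidef_conjTranspose_mul_self P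

section Iteration

variable {ι K : Type*} [Fintype ι] [Field K]

/-- The coefficient `α` of the conjugate gradient method: the step from an iterate with residual `r`
along the direction `p` that makes the new residual orthogonal to `p`. -/
def stepSize (S : Matrix ι ι K) (r p : ι → K) : K :=
  (r ⬝ᵥ p) / (p ⬝ᵥ S *ᵥ p)

/-- The coefficient `β` of the conjugate gradient method preconditioned by `M`: the multiple of the
previous direction `p` whose addition to `M *ᵥ r` makes the new direction `S`-conjugate to `p`. -/
def conjugationCoeff (S M : Matrix ι ι K) (r p : ι → K) : K :=
  -(r ⬝ᵥ M *ᵥ (S *ᵥ p)) / (p ⬝ᵥ S *ᵥ p)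

/-- The conjugate gradient iteration for `S x = b` preconditioned by `M`, with iterates `x`,
directions `p` and residuals `r`. The restricted Krylov method is the case `M = Π_C`. The sequences
are infinite: after a breakdown `p k ⬝ᵥ S *ᵥ p k = 0` they continue with both coefficients equal
to `0`, the value of a division by zero. -/
structure IsPreconditionedCG (S M : Matrix ι ι K) (b : ι → K) (x p r : ℕ → ι → K) : Prop where
  residual_eq : ∀ k, r k = b - S *ᵥ x k
  direction_zero : p 0 = M *ᵥ r 0
  direction_succ : ∀ k, p (k + 1) = M *ᵥ r (k + 1) + conjugationCoeff S M (r (k + 1)) (p k) • p k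
  iterate_succ : ∀ k, x (k + 1) = x k + stepSize S (r k) (p k) • p k

namespace IsPreconditionedCG

variable {S M : Matrix ι ι K} {b : ι → K} {x p r : ℕ → ι → K} {k : ℕ}

theorem residual_succ (h : IsPreconditionedCG S M b x p r) (k : ℕ) :
    r (k + 1) = r k - stepSize S (r k) (p k) • S *ᵥ p k := by
  rw [h.residual_eq (k + 1), h.iterate_succ, mulVec_add, mulVec_smul, ← sub_sub, ← h.residual_eq]

theorem residual_succ_dotProduct_direction (h : IsPreconditionedCG S M b x p r)
    (hk : p k ⬝ᵥ S *ᵥ p k ≠ 0) : r (k + 1) ⬝ᵥ p k = 0 := by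
  rw [h.residual_succ, sub_dotProduct, smul_dotProduct, dotProduct_comm (S *ᵥ p k), smul_eq_mul,
    stepSize, div_mul_cancel₀ _ hk, sub_self]

theorem residual_dotProduct_direction (h : IsPreconditionedCG S M b x p r)
    (hp : ∀ j < k, p j ⬝ᵥ S *ᵥ p j ≠ 0) : r k ⬝ᵥ p k = r k ⬝ᵥ M *ᵥ r k := by
  cases k with
  | zero => rw [h.direction_zero]
  | succ k =>
    rw [h.direction_succ, dotProduct_add, dotProduct_smul,
      h.residual_succ_dotProduct_direction (hp k k.lt_succ_self), smul_zero, add_zero]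

theorem direction_succ_dotProduct_mulVec_direction (h : IsPreconditionedCG S M b x p r)
    (hM : M.IsSymm) (hk : p k ⬝ᵥ S *ᵥ p k ≠ 0) : p (k + 1) ⬝ᵥ S *ᵥ p k = 0 := by
  rw [h.direction_succ, add_dotProduct, smul_dotProduct, smul_eq_mul, conjugationCoeff,
    div_mul_cancel₀ _ hk, dotProduct_comm (M *ᵥ _), dotProduct_mulVec_comm_of_isSymm hM,
    add_neg_cancel]

theorem residual_add_two_dotProduct_direction (h : IsPreconditionedCG S M b x p r)
    (hS : S.IsSymm) (hM : M.IsSymm) (hk : p k ⬝ᵥ S *ᵥ p k ≠ 0) : r (k + 2) ⬝ᵥ p k = 0 := by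
  have hconj : S *ᵥ p (k + 1) ⬝ᵥ p k = 0 := by
    rw [dotProduct_comm, dotProduct_mulVec_comm_of_isSymm hS,
      h.direction_succ_dotProduct_mulVec_direction hM hk]
  rw [h.residual_succ, sub_dotProduct, smul_dotProduct, hconj,
    h.residual_succ_dotProduct_direction hk, smul_zero, sub_zero]

theorem residual_succ_dotProduct_mulVec_residual (h : IsPreconditionedCG S M b x p r)
    (hS : S.IsSymm) (hM : M.IsSymm) (hp : ∀ j ≤ k, p j ⬝ᵥ S *ᵥ p j ≠ 0) :
    r (k + 1) ⬝ᵥ M *ᵥ r k = 0 := by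
  have horth : r (k + 1) ⬝ᵥ p k = 0 := h.residual_succ_dotProduct_direction (hp k le_rfl)
  cases k with
  | zero => rwa [← h.direction_zero]
  | succ k =>
    rwa [h.direction_succ, dotProduct_add, dotProduct_smul,
      h.residual_add_two_dotProduct_direction hS hM (hp k k.le_succ), smul_zero, add_zero] at horth

theorem conjugationCoeff_mul_residual_dotProduct_mulVec_residual
    (h : IsPreconditionedCG S M b x p r) (hS : S.IsSymm) (hM : M.IsSymm)
    (hp : ∀ j ≤ k, p j ⬝ᵥ S *ᵥ p j ≠ 0) :
    conjugationCoeff S M (r (k + 1)) (p k) * (r k ⬝ᵥ M *ᵥ r k) =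
      r (k + 1) ⬝ᵥ M *ᵥ r (k + 1) := by
  have hα : r k ⬝ᵥ p k = r k ⬝ᵥ M *ᵥ r k :=
    h.residual_dotProduct_direction fun j hj => hp j hj.le
  symm
  calc
    r (k + 1) ⬝ᵥ M *ᵥ r (k + 1)
      = r (k + 1) ⬝ᵥ M *ᵥ (r k - stepSize S (r k) (p k) • S *ᵥ p k) := by rw [← h.residual_succ]
    _ = -(stepSize S (r k) (p k) * (r (k + 1) ⬝ᵥ M *ᵥ (S *ᵥ p k))) := by
      rw [mulVec_sub, mulVec_smul, dotProduct_sub, dotProduct_smul, smul_eq_mul,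
        h.residual_succ_dotProduct_mulVec_residual hS hM hp, zero_sub]
    _ = conjugationCoeff S M (r (k + 1)) (p k) * (r k ⬝ᵥ M *ᵥ r k) := by
      rw [stepSize, conjugationCoeff, hα]
      ring

theorem direction_eq_zero (h : IsPreconditionedCG S M b x p r) (hM : M.IsSymm)
    (hk : M *ᵥ r k = 0) : p k = 0 := by
  cases k with
  | zero => rw [h.direction_zero, hk]
  | succ k =>
    have hcoeff : conjugationCoeff S M (r (k + 1)) (p k) = 0 := by
      rw [conjugationCoeff, dotProduct_mulVec_comm_of_isSymm hM, hk, dotProduct_zero, neg_zero,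
        zero_div]
    rw [h.direction_succ, hk, hcoeff, zero_smul, add_zero]

end IsPreconditionedCG

end Iteration

theorem rek_coefficient_formulas_general {ι : Type*} [Fintype ι] {S M : Matrix ι ι ℝ}
    (hS : S.IsSymm) (hM : M.PosSemidef) {b : ι → ℝ} {x p r : ℕ → ι → ℝ}
    (h : IsPreconditionedCG S M b x p r) {k : ℕ} (hp : ∀ j ≤ k, p j ⬝ᵥ S *ᵥ p j ≠ 0) :
    stepSize S (r k) (p k) = (r k ⬝ᵥ M *ᵥ r k) / (p k ⬝ᵥ S *ᵥ p k) ∧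
      conjugationCoeff S M (r (k + 1)) (p k) =
        (r (k + 1) ⬝ᵥ M *ᵥ r (k + 1)) / (r k ⬝ᵥ M *ᵥ r k) := by
  have hMsymm : M.IsSymm := isHermitian_iff_isSymm.mp hM.isHermitian
  have hres : r k ⬝ᵥ M *ᵥ r k ≠ 0 := fun hzero => by
    have hpk : p k = 0 := h.direction_eq_zero hMsymm ((hM.dotProduct_mulVec_zero_iff _).mp hzero)
    exact hp k le_rfl (by rw [hpk, zero_dotProduct])
  constructor
  · rw [stepSize, h.residual_dotProduct_direction fun j hj => hp j hj.le]
  · exact eq_div_of_mul_eq hres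
      (h.conjugationCoeff_mul_residual_dotProduct_mulVec_residual hS hMsymm hp)

/-- Simplified coefficient formulas for the ReK method: if the ReK directions
`p₀, …, p_{q−1}` are all nonzero, then
`α_k = (r_kᵀ Π_C r_k)/(p_kᵀ S p_k)` for `k = 0, …, q−1`, and
`β_{k+1} = (r_{k+1}ᵀ Π_C r_{k+1})/(r_kᵀ Π_C r_k)` for `k = 0, …, q−2`,
where `α_k = (r_kᵀ p_k)/(p_kᵀ S p_k)` and
`β_{k+1} = −(r_{k+1}ᵀ Π_C S p_k)/(p_kᵀ S p_k)`. -/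
theorem rek_coefficient_formulas
    (n m : ℕ) (hn : 0 < n) (hm : 0 < m)
    (S : Matrix (Fin n) (Fin n) ℝ) (hS : S.PosDef)
    (C : Matrix (Fin n) (Fin m) ℝ) (b : Fin n → ℝ)
    (q : ℕ) (hq : q = C.rank)
    (Pr : Matrix (Fin n) (Fin n) ℝ)
    (hPrSym : Prᵀ = Pr) (hPrIdem : Pr * Pr = Pr)
    (hPrRange : LinearMap.range Pr.mulVecLin = LinearMap.range C.mulVecLin)
    (x p r : ℕ → (Fin n → ℝ))
    (hr : ∀ k, r k = b - S.mulVec (x k))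
    (hx0 : x 0 ∈ LinearMap.range C.mulVecLin)
    (hp0 : p 0 = Pr.mulVec (r 0))
    (hprec : ∀ k : ℕ, p (k + 1) = Pr.mulVec (r (k + 1)) +
        (-(r (k + 1) ⬝ᵥ Pr.mulVec (S.mulVec (p k))) / (p k ⬝ᵥ S.mulVec (p k))) • p k)
    (hxrec : ∀ k : ℕ, x (k + 1) = x k +
        ((r k ⬝ᵥ p k) / (p k ⬝ᵥ S.mulVec (p k))) • p k)
    (hpnz : ∀ k, k < q → p k ≠ 0) :
    (∀ k : ℕ, k < q →
        (r k ⬝ᵥ p k) / (p k ⬝ᵥ S.mulVec (p k)) =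
          (r k ⬝ᵥ Pr.mulVec (r k)) / (p k ⬝ᵥ S.mulVec (p k))) ∧
      (∀ k : ℕ, k + 1 < q →
        -(r (k + 1) ⬝ᵥ Pr.mulVec (S.mulVec (p k))) / (p k ⬝ᵥ S.mulVec (p k)) =
          (r (k + 1) ⬝ᵥ Pr.mulVec (r (k + 1))) / (r k ⬝ᵥ Pr.mulVec (r k))) := by
  have hS_symm : S.IsSymm := isHermitian_iff_isSymm.mp hS.isHermitian
  have hPr : IsStarProjection Pr :=
    ⟨hPrIdem, (conjTranspose_eq_transpose_of_trivial Pr).trans hPrSym⟩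
  have hformulas (k : ℕ) (hk : k < q) :=
    rek_coefficient_formulas_general hS_symm (posSemidef_of_isStarProjection hPr)
      ⟨hr, hp0, hprec, hxrec⟩
      fun j (hj : j ≤ k) => (hS.dotProduct_mulVec_pos (hpnz j (hj.trans_lt hk))).ne'
  exact ⟨fun k hk => (hformulas k hk).1, fun k hk => (hformulas k (k.lt_succ_self.trans hk)).2⟩
end

section
/- (Matricized Khatri-Rao product; correctness of the lazy Khatri-Rao evaluation.) For any n×n block matrices K, S ∈ ℝ^{R×R} and any block-diagonal matrix B = diag(B₁,…,Bₙ) with Bᵢ ∈ ℝ^{rᵢ×rᵢ}, the Khatri-Rao product acts on the block-diagonal vectorization by (K ⊙ S)·odvec(B) = odvec(diag(C₁,…,Cₙ)), where the i-th diagonal block is Cᵢ = Σ_{i'=1}^{n} S_{i i'} B_{i'} K_{i i'}ᵀ. -/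
open Matrix

/-- The `(i₁, i₂)` block of an `n × n` block matrix indexed by `Σ i, Fin (r i)`. -/
def blockOf {n : ℕ} {r : Fin n → ℕ}
    (M : Matrix (Σ i : Fin n, Fin (r i)) (Σ i : Fin n, Fin (r i)) ℝ)
    (i₁ i₂ : Fin n) : Matrix (Fin (r i₁)) (Fin (r i₂)) ℝ :=
  fun a b => M ⟨i₁, a⟩ ⟨i₂, b⟩

/-- Block-diagonal (column-major) vectorization: stack the vectorizations
`vec(B₁), …, vec(Bₙ)` of the diagonal blocks.  With this indexing, the entry at
`⟨i, (a, c)⟩` is `Bᵢ[c, a]`, so that the Kronecker/vec convention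
`(A ⊗ B)·vec(X) = vec(B X Aᵀ)` holds for the Khatri-Rao product below. -/
def odvec {n : ℕ} {r : Fin n → ℕ}
    (Bs : ∀ i : Fin n, Matrix (Fin (r i)) (Fin (r i)) ℝ) :
    (Σ i : Fin n, Fin (r i) × Fin (r i)) → ℝ :=
  fun s => Bs s.1 s.2.2 s.2.1

/-- Block-wise Khatri-Rao product: the `(i₁, i₂)` block is the Kronecker product
`K_{i₁i₂} ⊗ S_{i₁i₂}` of the corresponding blocks. -/
def khatriRao {n : ℕ} {r : Fin n → ℕ}
    (K S : Matrix (Σ i : Fin n, Fin (r i)) (Σ i : Fin n, Fin (r i)) ℝ) :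
    Matrix (Σ i : Fin n, Fin (r i) × Fin (r i)) (Σ i : Fin n, Fin (r i) × Fin (r i)) ℝ :=
  fun s t => K ⟨s.1, s.2.1⟩ ⟨t.1, t.2.1⟩ * S ⟨s.1, s.2.2⟩ ⟨t.1, t.2.2⟩

open scoped Kronecker

section BlockMatrix

variable {ι κ R : Type*} {l m : ι → Type*} {n p : κ → Type*}

/-- The block matrix with prescribed, possibly rectangular, blocks; with Kronecker products
`K i j ⊗ₖ S i j` as blocks it is the Khatri-Rao product of rectangular block matrices. Block sizes
may vary, so rows and columns are indexed by sigma types. -/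
def ofBlocks (M : ∀ i j, Matrix (m i) (n j) R) : Matrix (Σ i, m i) (Σ j, n j) R :=
  of fun s t => M s.1 t.1 s.2 t.2

theorem ofBlocks_mulVec_uncurry [NonUnitalNonAssocSemiring R] [Fintype κ] [∀ j, Fintype (n j)]
    (M : ∀ i j, Matrix (m i) (n j) R) (v : ∀ j, n j → R) :
    ofBlocks M *ᵥ Sigma.uncurry v = Sigma.uncurry fun i => ∑ j, M i j *ᵥ v j := by
  ext ⟨i, a⟩
  calc (ofBlocks M *ᵥ Sigma.uncurry v) ⟨i, a⟩
      = ∑ j, (M i j *ᵥ v j) a := Fintype.sum_sigma _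
    _ = (∑ j, M i j *ᵥ v j) a := (Finset.sum_apply a _ _).symm

theorem khatriRao_mulVec_odvec_general [NonUnitalCommSemiring R] [Fintype κ]
    [∀ j, Fintype (n j)] [∀ j, Fintype (p j)]
    (K : ∀ i j, Matrix (l i) (n j) R) (S : ∀ i j, Matrix (m i) (p j) R)
    (B : ∀ j, Matrix (p j) (n j) R) :
    ofBlocks (fun i j => K i j ⊗ₖ S i j) *ᵥ Sigma.uncurry (fun j => vec (B j)) =
      Sigma.uncurry fun i => vec (∑ j, S i j * B j * (K i j)ᵀ) := by
  simp only [ofBlocks_mulVec_uncurry, kronecker_mulVec_vec, vec_sum]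

end BlockMatrix

section RealBlocks

variable {n : ℕ} {r : Fin n → ℕ}

theorem khatriRao_eq_ofBlocks (K S : Matrix (Σ i, Fin (r i)) (Σ i, Fin (r i)) ℝ) :
    khatriRao K S = ofBlocks fun i j => blockOf K i j ⊗ₖ blockOf S i j :=
  rfl

theorem odvec_eq_uncurry_vec (B : ∀ i, Matrix (Fin (r i)) (Fin (r i)) ℝ) :
    odvec B = Sigma.uncurry fun i => vec (B i) :=
  rfl

end RealBlocks

/-- Matricized Khatri-Rao product: for block matrices `K, S` and a block-diagonal
matrix `B = diag(B₁,…,Bₙ)`, one has `(K ⊙ S)·odvec(B) = odvec(diag(C₁,…,Cₙ))` with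
`Cᵢ = Σ_{i'} S_{i i'} B_{i'} K_{i i'}ᵀ`. -/
theorem khatriRao_mulVec_odvec
    (n : ℕ) (hn : 0 < n) (r : Fin n → ℕ) (hr : ∀ i, 0 < r i)
    (K S : Matrix (Σ i : Fin n, Fin (r i)) (Σ i : Fin n, Fin (r i)) ℝ)
    (Bs : ∀ i : Fin n, Matrix (Fin (r i)) (Fin (r i)) ℝ) :
    (khatriRao K S).mulVec (odvec Bs) =
      odvec (fun i => ∑ i' : Fin n, blockOf S i i' * Bs i' * (blockOf K i i')ᵀ) := by
  simp only [khatriRao_eq_ofBlocks, odvec_eq_uncurry_vec]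
  exact khatriRao_mulVec_odvec_general (blockOf K) (blockOf S) Bs
end

section
/- (Spectral decomposition of the covariance quadratic form on the range of the Gram matrix.) Under the stated hypotheses, for all w₁, w₂ ∈ ℝ^R, setting f₁ = K w₁ and f₂ = K w₂, one has f₁ᵀ B f₂ = f₁ᵀ U Λ Uᵀ f₂ = Σ_{l=1}^{q} λ_l · (f₁ᵀ u_l)(u_lᵀ f₂), where u₁,…,u_q are the columns of U; in particular, the value f₁ᵀ U Λ Uᵀ f₂ does not depend on the choice of U satisfying K^{1/2}U = V. -/
open Matrix

/-!
If `f₁ = S x` and `f₂ = S y`, then `f₁ᵀ B f₂ = xᵀ (Sᵀ B S) y`, so on the range of `S` the form `B`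
is determined by the congruent matrix `Sᵀ B S`. As `Sᵀ U = V`, the matrix `U Λ Uᵀ` is congruent to
`V Λ Vᵀ = Sᵀ B S` as well. For `S = K^{1/2}`, the vectors `K w = K^{1/2} (K^{1/2} w)` lie in the
range of `S`.
-/

section Congruence

variable {l m n q α : Type*} [Fintype m] [Fintype n] [NonUnitalCommSemiring α]

lemma mulVec_dotProduct_mulVec_mulVec [Fintype l] [Fintype q] (P : Matrix m l α)
    (M : Matrix m n α) (Q : Matrix n q α) (x : l → α) (y : q → α) :
    P *ᵥ x ⬝ᵥ M *ᵥ Q *ᵥ y = x ⬝ᵥ (Pᵀ * M * Q) *ᵥ y := by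
  rw [← mulVec_mulVec, ← mulVec_mulVec, dotProduct_mulVec x Pᵀ, vecMul_transpose]

lemma dotProduct_mul_diagonal_mul_transpose_mulVec [Fintype q] [DecidableEq q]
    (U : Matrix m q α) (d : q → α) (W : Matrix n q α) (x : m → α) (y : n → α) :
    x ⬝ᵥ (U * diagonal d * Wᵀ) *ᵥ y = ∑ k, d k * ((x ⬝ᵥ U.col k) * (W.col k ⬝ᵥ y)) := by
  calc x ⬝ᵥ (U * diagonal d * Wᵀ) *ᵥ y
      = x ᵥ* U ⬝ᵥ diagonal d *ᵥ Wᵀ *ᵥ y := by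
        rw [← mulVec_mulVec, ← mulVec_mulVec, dotProduct_mulVec x U]
    _ = ∑ k, (x ⬝ᵥ U.col k) * (d k * (W.col k ⬝ᵥ y)) :=
        Finset.sum_congr rfl fun k _ => congrArg _ (mulVec_diagonal d (Wᵀ *ᵥ y) k)
    _ = ∑ k, d k * ((x ⬝ᵥ U.col k) * (W.col k ⬝ᵥ y)) :=
        Finset.sum_congr rfl fun k _ => mul_left_comm _ _ _

lemma mulVec_dotProduct_mulVec_eq_of_congruence [Fintype q] {S : Matrix m n α}
    {B : Matrix m m α} {D : Matrix q q α} {V : Matrix n q α} {U : Matrix m q α}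
    (hspec : Sᵀ * B * S = V * D * Vᵀ) (hU : Sᵀ * U = V) (x y : n → α) :
    S *ᵥ x ⬝ᵥ B *ᵥ S *ᵥ y = S *ᵥ x ⬝ᵥ (U * D * Uᵀ) *ᵥ S *ᵥ y := by
  have hcongr : Sᵀ * (U * D * Uᵀ) * S = Sᵀ * B * S := by
    rw [hspec, ← hU, transpose_mul, transpose_transpose]
    simp only [Matrix.mul_assoc]
  rw [mulVec_dotProduct_mulVec_mulVec, mulVec_dotProduct_mulVec_mulVec, hcongr]

theorem covariance_spectral_decomposition_on_range_general [Fintype q] [DecidableEq q]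
    {S : Matrix m n α} {B : Matrix m m α} {lam : q → α} {V : Matrix n q α} {U : Matrix m q α}
    (hspec : Sᵀ * B * S = V * diagonal lam * Vᵀ) (hU : Sᵀ * U = V) (x y : n → α) :
    S *ᵥ x ⬝ᵥ B *ᵥ S *ᵥ y = S *ᵥ x ⬝ᵥ (U * diagonal lam * Uᵀ) *ᵥ S *ᵥ y ∧
      S *ᵥ x ⬝ᵥ (U * diagonal lam * Uᵀ) *ᵥ S *ᵥ y =
        ∑ k, lam k * ((S *ᵥ x ⬝ᵥ U.col k) * (U.col k ⬝ᵥ S *ᵥ y)) ∧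
      ∀ U' : Matrix m q α, Sᵀ * U' = V →
        S *ᵥ x ⬝ᵥ (U * diagonal lam * Uᵀ) *ᵥ S *ᵥ y =
          S *ᵥ x ⬝ᵥ (U' * diagonal lam * U'ᵀ) *ᵥ S *ᵥ y := by
  have hBU := mulVec_dotProduct_mulVec_eq_of_congruence hspec hU x y
  refine ⟨hBU, dotProduct_mul_diagonal_mul_transpose_mulVec U lam U _ _, fun U' hU' => ?_⟩
  exact hBU.symm.trans (mulVec_dotProduct_mulVec_eq_of_congruence hspec hU' x y)

end Congruence

/-- Spectral decomposition of the covariance quadratic form on the range of the Gram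
matrix: under the stated hypotheses, for all `w₁, w₂ ∈ ℝ^R`, setting `f₁ = K w₁` and
`f₂ = K w₂`, one has `f₁ᵀ B f₂ = f₁ᵀ U Λ Uᵀ f₂ = Σ_l λ_l (f₁ᵀ u_l)(u_lᵀ f₂)`, where
`u₁,…,u_q` are the columns of `U`; in particular, the value `f₁ᵀ U Λ Uᵀ f₂` does not
depend on the choice of `U` satisfying `K^{1/2} U = V`. -/
theorem covariance_spectral_decomposition_on_range
    (R q : ℕ) (hR : 0 < R) (hq : 0 < q)
    (K : Matrix (Fin R) (Fin R) ℝ) (hK : K.PosSemidef)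
    (Khalf : Matrix (Fin R) (Fin R) ℝ) (hKhalf : Khalf.PosSemidef)
    (hKhalfSq : Khalf * Khalf = K)
    (B : Matrix (Fin R) (Fin R) ℝ) (hB : Bᵀ = B)
    (lam : Fin q → ℝ) (hlam : ∀ l, lam l ≠ 0)
    (V : Matrix (Fin R) (Fin q) ℝ) (hV : Vᵀ * V = 1)
    (hspec : Khalf * B * Khalf = V * Matrix.diagonal lam * Vᵀ)
    (U : Matrix (Fin R) (Fin q) ℝ) (hU : Khalf * U = V) :
    ∀ w₁ w₂ : Fin R → ℝ,
      (K.mulVec w₁) ⬝ᵥ B.mulVec (K.mulVec w₂) =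
        (K.mulVec w₁) ⬝ᵥ (U * Matrix.diagonal lam * Uᵀ).mulVec (K.mulVec w₂) ∧
      (K.mulVec w₁) ⬝ᵥ (U * Matrix.diagonal lam * Uᵀ).mulVec (K.mulVec w₂) =
        ∑ l : Fin q, lam l *
          (((K.mulVec w₁) ⬝ᵥ (fun i => U i l)) * ((fun i => U i l) ⬝ᵥ (K.mulVec w₂))) ∧
      ∀ U' : Matrix (Fin R) (Fin q) ℝ, Khalf * U' = V →
        (K.mulVec w₁) ⬝ᵥ (U * Matrix.diagonal lam * Uᵀ).mulVec (K.mulVec w₂) =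
          (K.mulVec w₁) ⬝ᵥ (U' * Matrix.diagonal lam * U'ᵀ).mulVec (K.mulVec w₂) := by
  have hsymm : Khalfᵀ = Khalf := isHermitian_iff_isSymm.mp hKhalf.isHermitian
  have hspecT : Khalfᵀ * B * Khalf = V * diagonal lam * Vᵀ := by rwa [hsymm]
  have hUT : Khalfᵀ * U = V := by rwa [hsymm]
  have hK_mulVec (w : Fin R → ℝ) : K *ᵥ w = Khalf *ᵥ Khalf *ᵥ w := by
    rw [mulVec_mulVec, hKhalfSq]
  intro w₁ w₂
  have hrange := covariance_spectral_decomposition_on_range_general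
    hspecT hUT (Khalf *ᵥ w₁) (Khalf *ᵥ w₂)
  rwa [hsymm, ← hK_mulVec, ← hK_mulVec] at hrange
end
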